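/- arXiv:1111.1041 — 2 statements merged into one kernel-verified Lean document; each statement's English description precedes it below -/
import Mathlib

section
/- Let φ and Φ denote the standard normal density and cumulative distribution function, and let η^soft(y;τ) = sign(y)(|y| − τ)₊ be scalar soft thresholding. Let F_{1,ε} be the set of Borel probability measures ν on ℝ with ν({x : x ≠ 0}) ≤ ε, and M(ε|Soft) = inf_{τ≥0} sup_{ν∈F_{1,ε}} E[(X − η^soft(X+Z;τ))²] with X ∼ ν and Z ∼ N(0,1) independent. Then for every τ ∈ (0,∞), setting ε = (2φ(τ) − 2τΦ(−τ)) / (τ + 2φ(τ) − 2τΦ(−τ)), one has M(ε|Soft) = 2φ(τ) / (τ + 2φ(τ) − 2τΦ(−τ)). -/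
open MeasureTheory ProbabilityTheory ENNReal

noncomputable section

/-- The standard normal density `φ(x) = e^{-x²/2}/√(2π)`. -/
def stdPhi (x : ℝ) : ℝ := Real.exp (-(x ^ 2) / 2) / Real.sqrt (2 * Real.pi)

/-- The standard normal cumulative distribution function `Φ`. -/
def stdCDF (x : ℝ) : ℝ := ((gaussianReal 0 1) (Set.Iic x)).toReal

/-- Scalar soft thresholding `η^soft(y;τ) = sign(y)(|y| − τ)₊`. -/
def softThr (τ y : ℝ) : ℝ := Real.sign y * max (|y| - τ) 0

/-- The class `F_{1,ε}` of Borel probability measures `ν` on `ℝ` with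
`ν({x : x ≠ 0}) ≤ ε`. -/
def scalarSparse (ε : ℝ) : Set (Measure ℝ) :=
  {ν | IsProbabilityMeasure ν ∧ ν {x : ℝ | x ≠ 0} ≤ ENNReal.ofReal ε}

/-- The minimax MSE of scalar soft thresholding,
`M(ε|Soft) = inf_{τ≥0} sup_{ν ∈ F_{1,ε}} E (X − η^soft(X+Z;τ))²`,
with `X ∼ ν`, `Z ∼ N(0,1)` independent. -/
def Msoft (ε : ℝ) : ℝ≥0∞ :=
  ⨅ (τ : ℝ) (_ : 0 ≤ τ), ⨆ ν ∈ scalarSparse ε,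
    ∫⁻ p : ℝ × ℝ, ENNReal.ofReal ((p.1 - softThr τ (p.1 + p.2)) ^ 2)
      ∂(ν.prod (gaussianReal 0 1))

/-!
Soft thresholding subtracts from `y` its truncation `c` to `[-t, t]`, so the error made on `x + z`
is `c - z`. For centred noise of variance `σ²` its mean square is at most `σ² + t²`, with equality
in the limit `x → ∞`, so the worst `ε`-sparse prior puts mass `1 - ε` at `0` and sends the remaining
mass to infinity. The worst-case risk at threshold `t` is therefore
`(1 - ε) E(|Z| - t)₊² + ε (σ² + t²)`, a convex function of `t`, which is minimal at `τ` when its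
derivative vanishes there: `(1 - ε) E(|Z| - τ)₊ = ε τ`. For Gaussian noise this equation is the
parametrisation of `ε` by `τ`.
-/

/-- The truncation of `y` to `[-t, t]`: what soft thresholding at `t` subtracts from `y`. -/
def clip (t y : ℝ) : ℝ := max (-t) (min y t)

lemma monotone_clip (t : ℝ) : Monotone (clip t) := fun _ _ h ↦
  max_le_max_left _ (min_le_min_right _ h)

lemma measurable_clip (t : ℝ) : Measurable (clip t) := (monotone_clip t).measurable

lemma clip_of_le {t y : ℝ} (ht : 0 ≤ t) (h : t ≤ y) : clip t y = t := by
  rw [clip, min_eq_right h, max_eq_right (by linarith)]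

lemma clip_sq_le {t : ℝ} (ht : 0 ≤ t) (y : ℝ) : clip t y ^ 2 ≤ t ^ 2 :=
  sq_le_sq' (le_max_left _ _) (max_le (by linarith) (min_le_right _ _))

lemma softThr_eq_sub_clip {t : ℝ} (ht : 0 ≤ t) (y : ℝ) : softThr t y = y - clip t y := by
  unfold softThr clip
  rcases lt_trichotomy y 0 with h | rfl | h
  · rw [Real.sign_of_neg h, abs_of_neg h]; grind
  · simp [ht]
  · rw [Real.sign_of_pos h, abs_of_pos h]; grind

lemma sub_softThr_add {t : ℝ} (ht : 0 ≤ t) (x z : ℝ) :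
    x - softThr t (x + z) = clip t (x + z) - z := by
  rw [softThr_eq_sub_clip ht]; ring

lemma measurable_softThr {t : ℝ} (ht : 0 ≤ t) : Measurable (softThr t) := by
  rw [funext (softThr_eq_sub_clip ht)]
  exact measurable_id.sub (measurable_clip t)

lemma softThr_sq {t : ℝ} (ht : 0 ≤ t) (y : ℝ) : softThr t y ^ 2 = max (|y| - t) 0 ^ 2 := by
  rw [softThr_eq_sub_clip ht, sq_eq_sq_iff_abs_eq_abs]
  unfold clip
  grind

-- The cross term is replaced by one linear in `z`, which centred noise averages out.
lemma sub_softThr_add_sq_le {t : ℝ} (ht : 0 ≤ t) (x z : ℝ) :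
    (x - softThr t (x + z)) ^ 2 ≤ z ^ 2 - 2 * clip t x * z + t ^ 2 := by
  have hz : 0 ≤ (clip t (x + z) - clip t x) * z := by
    rcases le_total 0 z with h | h
    · exact mul_nonneg (sub_nonneg.2 (monotone_clip t (by linarith))) h
    · exact mul_nonneg_of_nonpos_of_nonpos (sub_nonpos.2 (monotone_clip t (by linarith))) h
  rw [sub_softThr_add ht]
  linarith [clip_sq_le ht (x + z)]

/-- The mean squared error at the point `x` of soft thresholding at `t`, for additive noise of
law `μ`. -/
def softRisk (μ : Measure ℝ) (t x : ℝ) : ℝ≥0∞ :=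
  ∫⁻ z, ENNReal.ofReal ((x - softThr t (x + z)) ^ 2) ∂μ

/-- The moment `E (|Z| - t)₊ ^ n` for `Z` of law `μ`. -/
def excessMoment (μ : Measure ℝ) (t : ℝ) (n : ℕ) : ℝ := ∫ z, max (|z| - t) 0 ^ n ∂μ

lemma excessMoment_nonneg (μ : Measure ℝ) (t : ℝ) (n : ℕ) : 0 ≤ excessMoment μ t n :=
  integral_nonneg fun _ ↦ pow_nonneg (le_max_right _ _) n

/-- The worst-case Bayes risk of soft thresholding at `t` over the `ε`-sparse priors, for additive
noise of law `μ`. -/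
def sparseSoftRisk (μ : Measure ℝ) (ε t : ℝ) : ℝ≥0∞ :=
  ⨆ ν ∈ scalarSparse ε, ∫⁻ p : ℝ × ℝ, ENNReal.ofReal ((p.1 - softThr t (p.1 + p.2)) ^ 2)
    ∂(ν.prod μ)

section SparsePriors

lemma lintegral_le_of_mem_scalarSparse {ε : ℝ} (hε0 : 0 ≤ ε) (hε1 : ε ≤ 1) {ν : Measure ℝ}
    (hν : ν ∈ scalarSparse ε) (f : ℝ → ℝ≥0∞) :
    ∫⁻ x, f x ∂ν ≤ ENNReal.ofReal (1 - ε) * f 0 + ENNReal.ofReal ε * ⨆ x, f x := by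
  obtain ⟨_, hmass⟩ := hν
  have hmeas : MeasurableSet {x : ℝ | x ≠ 0} := (measurableSet_singleton 0).compl
  have hcompl : {x : ℝ | x ≠ 0}ᶜ = {0} := by ext; simp
  have hzero : ν {0} = ENNReal.ofReal (1 - ε) + (ENNReal.ofReal ε - ν {x : ℝ | x ≠ 0}) := by
    rw [← hcompl, prob_compl_eq_one_sub hmeas,
      ← (ENNReal.cancel_of_ne (measure_ne_top ν _)).add_tsub_assoc_of_le hmass,
      ← ENNReal.ofReal_add (sub_nonneg.2 hε1) hε0, sub_add_cancel, ENNReal.ofReal_one]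
  calc ∫⁻ x, f x ∂ν
      = ∫⁻ x in {x : ℝ | x ≠ 0}, f x ∂ν + f 0 * ν {0} := by
        rw [← lintegral_add_compl _ hmeas, hcompl, lintegral_singleton]
    _ ≤ (⨆ x, f x) * ν {x : ℝ | x ≠ 0} + f 0 * ν {0} := by
        gcongr
        exact (setLIntegral_mono' hmeas fun x _ ↦ le_iSup f x).trans_eq (setLIntegral_const _ _)
    _ ≤ (⨆ x, f x) * ν {x : ℝ | x ≠ 0} + (f 0 * ENNReal.ofReal (1 - ε) +
          (⨆ x, f x) * (ENNReal.ofReal ε - ν {x : ℝ | x ≠ 0})) := by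
        rw [hzero, mul_add]
        gcongr
        exact le_iSup f 0
    _ = ENNReal.ofReal (1 - ε) * f 0 + ENNReal.ofReal ε * ⨆ x, f x := by
        rw [add_left_comm, ← mul_add, add_tsub_cancel_of_le hmass, mul_comm, mul_comm (⨆ x, f x)]

lemma dirac_mixture_mem_scalarSparse {ε : ℝ} (hε0 : 0 ≤ ε) (hε1 : ε ≤ 1) (x : ℝ) :
    ENNReal.ofReal (1 - ε) • Measure.dirac (0 : ℝ) + ENNReal.ofReal ε • Measure.dirac x ∈
      scalarSparse ε := by
  refine ⟨⟨?_⟩, ?_⟩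
  · simp [← ENNReal.ofReal_add (sub_nonneg.2 hε1) hε0]
  · simpa using mul_le_of_le_one_right zero_le (prob_le_one (μ := Measure.dirac x))

lemma iSup_lintegral_scalarSparse {ε : ℝ} (hε0 : 0 ≤ ε) (hε1 : ε ≤ 1) (f : ℝ → ℝ≥0∞) :
    ⨆ ν ∈ scalarSparse ε, ∫⁻ x, f x ∂ν =
      ENNReal.ofReal (1 - ε) * f 0 + ENNReal.ofReal ε * ⨆ x, f x := by
  refine le_antisymm (iSup₂_le fun ν hν ↦ lintegral_le_of_mem_scalarSparse hε0 hε1 hν f) ?_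
  rw [ENNReal.mul_iSup, ENNReal.add_iSup]
  refine iSup_le fun x ↦ le_iSup₂_of_le _ (dirac_mixture_mem_scalarSparse hε0 hε1 x) ?_
  simp

end SparsePriors

section CentredNoise

variable {μ : Measure ℝ}

lemma memLp_excess [IsFiniteMeasure μ] (hμ : MemLp id 2 μ) (t : ℝ) :
    MemLp (fun z ↦ max (|z| - t) 0) 2 μ :=
  (hμ.abs.sub (memLp_const t)).pos_part

lemma integral_sq_sub_mul_add [IsProbabilityMeasure μ] (hμ : MemLp id 2 μ)
    (hmean : ∫ z, z ∂μ = 0) (b c : ℝ) :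
    ∫ z, (z ^ 2 - b * z + c) ∂μ = Var[id; μ] + c := by
  have hid : Integrable (fun z ↦ z) μ := hμ.integrable one_le_two
  have hsq : Integrable (fun z ↦ z ^ 2) μ := hμ.integrable_sq
  have hlin : Integrable (fun z ↦ b * z) μ := hid.const_mul b
  rw [integral_add (hsq.sub' hlin) (integrable_const c), integral_sub hsq hlin,
    integral_const_mul, hmean, variance_of_integral_eq_zero aemeasurable_id hmean]
  simp

lemma integrable_sq_sub_mul_add [IsFiniteMeasure μ] (hμ : MemLp id 2 μ) (b c : ℝ) :
    Integrable (fun z ↦ z ^ 2 - b * z + c) μ :=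
  (hμ.integrable_sq.sub ((hμ.integrable one_le_two).const_mul b)).add (integrable_const c)

lemma softRisk_zero [IsFiniteMeasure μ] (hμ : MemLp id 2 μ) {t : ℝ} (ht : 0 ≤ t) :
    softRisk μ t 0 = ENNReal.ofReal (excessMoment μ t 2) := by
  rw [excessMoment, ofReal_integral_eq_lintegral_ofReal (memLp_excess hμ t).integrable_sq
    (ae_of_all _ fun _ ↦ sq_nonneg _)]
  simp only [softRisk, zero_add, zero_sub, neg_sq, softThr_sq ht]

lemma softRisk_le [IsProbabilityMeasure μ] (hμ : MemLp id 2 μ) (hmean : ∫ z, z ∂μ = 0) {t : ℝ}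
    (ht : 0 ≤ t) (x : ℝ) : softRisk μ t x ≤ ENNReal.ofReal (Var[id; μ] + t ^ 2) := by
  have hle := sub_softThr_add_sq_le ht x
  rw [← integral_sq_sub_mul_add hμ hmean (2 * clip t x),
    ofReal_integral_eq_lintegral_ofReal (integrable_sq_sub_mul_add hμ _ _)
      (ae_of_all _ fun z ↦ (sq_nonneg _).trans (hle z))]
  exact lintegral_mono fun z ↦ ENNReal.ofReal_le_ofReal (hle z)

lemma tendsto_softRisk_atTop [IsFiniteMeasure μ] (hμ : MemLp id 2 μ) {t : ℝ} (ht : 0 ≤ t) :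
    Filter.Tendsto (softRisk μ t) Filter.atTop
      (nhds (∫⁻ z, ENNReal.ofReal ((t - z) ^ 2) ∂μ)) := by
  have hbound : Integrable (fun z ↦ 2 * (t ^ 2 + z ^ 2)) μ :=
    ((integrable_const (t ^ 2)).add hμ.integrable_sq).const_mul 2
  refine tendsto_lintegral_filter_of_dominated_convergence
    (fun z ↦ ENNReal.ofReal (2 * (t ^ 2 + z ^ 2))) (.of_forall fun x ↦ ?_)
    (.of_forall fun x ↦ ae_of_all _ fun z ↦ ENNReal.ofReal_le_ofReal ?_)
    hbound.lintegral_lt_top.ne (ae_of_all _ fun z ↦ ?_)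
  · have := measurable_softThr ht
    fun_prop
  · rw [sub_softThr_add ht]
    linarith [clip_sq_le ht (x + z), sq_nonneg (clip t (x + z) + z)]
  · refine tendsto_const_nhds.congr' ?_
    filter_upwards [Filter.eventually_ge_atTop (t - z)] with x hx
    rw [sub_softThr_add ht, clip_of_le ht (by linarith)]

lemma iSup_softRisk [IsProbabilityMeasure μ] (hμ : MemLp id 2 μ) (hmean : ∫ z, z ∂μ = 0) {t : ℝ}
    (ht : 0 ≤ t) : ⨆ x, softRisk μ t x = ENNReal.ofReal (Var[id; μ] + t ^ 2) := by
  have hexpand : ∀ z : ℝ, (t - z) ^ 2 = z ^ 2 - 2 * t * z + t ^ 2 := fun z ↦ by ring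
  have hlim : ∫⁻ z, ENNReal.ofReal ((t - z) ^ 2) ∂μ = ENNReal.ofReal (Var[id; μ] + t ^ 2) := by
    rw [← integral_sq_sub_mul_add hμ hmean (2 * t), ofReal_integral_eq_lintegral_ofReal
      (integrable_sq_sub_mul_add hμ _ _)
      (ae_of_all _ fun z ↦ (sq_nonneg (t - z)).trans_eq (hexpand z))]
    simp only [hexpand]
  exact iSup_eq_of_forall_le_of_tendsto (softRisk_le hμ hmean ht)
    (hlim ▸ tendsto_softRisk_atTop hμ ht)

lemma sparseSoftRisk_eq_iSup_lintegral [SFinite μ] (ε : ℝ) {t : ℝ} (ht : 0 ≤ t) :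
    sparseSoftRisk μ ε t = ⨆ ν ∈ scalarSparse ε, ∫⁻ x, softRisk μ t x ∂ν := by
  have := measurable_softThr ht
  refine iSup_congr fun ν ↦ iSup_congr fun _ ↦ lintegral_prod _ ?_
  fun_prop

theorem sparseSoftRisk_eq [IsProbabilityMeasure μ] (hμ : MemLp id 2 μ) (hmean : ∫ z, z ∂μ = 0)
    {ε t : ℝ} (hε0 : 0 ≤ ε) (hε1 : ε ≤ 1) (ht : 0 ≤ t) :
    sparseSoftRisk μ ε t =
      ENNReal.ofReal ((1 - ε) * excessMoment μ t 2 + ε * (Var[id; μ] + t ^ 2)) := by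
  have h1ε : 0 ≤ 1 - ε := sub_nonneg.2 hε1
  have hvar : 0 ≤ Var[id; μ] := variance_nonneg _ _
  rw [sparseSoftRisk_eq_iSup_lintegral ε ht, iSup_lintegral_scalarSparse hε0 hε1,
    softRisk_zero hμ ht, iSup_softRisk hμ hmean ht, ENNReal.ofReal_add
      (mul_nonneg h1ε (excessMoment_nonneg μ t 2)) (by positivity),
    ENNReal.ofReal_mul h1ε, ENNReal.ofReal_mul hε0]

lemma sq_max_sub_tangent_le (u s t : ℝ) :
    max (u - s) 0 ^ 2 - 2 * (t - s) * max (u - s) 0 ≤ max (u - t) 0 ^ 2 := by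
  rcases le_total u s with hs | hs <;> rcases le_total u t with ht | ht <;>
    simp only [max_eq_left, max_eq_right, sub_nonneg, sub_nonpos, hs, ht] <;>
    nlinarith [sq_nonneg (t - s)]

-- The derivative of `t ↦ E (|Z| - t)₊²` at `s` is `-2 E (|Z| - s)₊`.
lemma excessMoment_two_tangent_le [IsFiniteMeasure μ] (hμ : MemLp id 2 μ) (s t : ℝ) :
    excessMoment μ s 2 - 2 * (t - s) * excessMoment μ s 1 ≤ excessMoment μ t 2 := by
  have hsq (r : ℝ) := (memLp_excess hμ r).integrable_sq
  have hlin := ((memLp_excess hμ s).integrable one_le_two).const_mul (2 * (t - s))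
  simp only [excessMoment, pow_one]
  rw [← integral_const_mul, ← integral_sub (hsq s) hlin]
  exact integral_mono ((hsq s).sub hlin) (hsq t) fun z ↦ sq_max_sub_tangent_le |z| s t

theorem iInf_sparseSoftRisk_of_stationary [IsProbabilityMeasure μ] (hμ : MemLp id 2 μ)
    (hmean : ∫ z, z ∂μ = 0) {ε τ : ℝ} (hε0 : 0 ≤ ε) (hε1 : ε ≤ 1) (hτ : 0 ≤ τ)
    (hstat : (1 - ε) * excessMoment μ τ 1 = ε * τ) :
    ⨅ (t : ℝ) (_ : 0 ≤ t), sparseSoftRisk μ ε t =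
      ENNReal.ofReal ((1 - ε) * excessMoment μ τ 2 + ε * (Var[id; μ] + τ ^ 2)) := by
  refine le_antisymm ((iInf₂_le τ hτ).trans_eq (sparseSoftRisk_eq hμ hmean hε0 hε1 hτ))
    (le_iInf₂ fun t ht ↦ ?_)
  rw [sparseSoftRisk_eq hμ hmean hε0 hε1 ht]
  refine ENNReal.ofReal_le_ofReal ?_
  have htangent := mul_le_mul_of_nonneg_left (excessMoment_two_tangent_le hμ τ t) (sub_nonneg.2 hε1)
  have hslope : (1 - ε) * (2 * (t - τ) * excessMoment μ τ 1) = 2 * (t - τ) * (ε * τ) := by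
    rw [← hstat]; ring
  linarith [mul_nonneg hε0 (sq_nonneg (t - τ))]

end CentredNoise

section StandardNormal

lemma gaussianPDFReal_zero_one : gaussianPDFReal 0 1 = stdPhi := by
  ext x
  simp only [gaussianPDFReal_def, stdPhi, NNReal.coe_one, mul_one, sub_zero]
  ring

lemma stdPhi_nonneg (x : ℝ) : 0 ≤ stdPhi x := by
  unfold stdPhi; positivity

lemma stdPhi_abs (x : ℝ) : stdPhi |x| = stdPhi x := by
  simp only [stdPhi, sq_abs]

lemma stdPhi_neg (x : ℝ) : stdPhi (-x) = stdPhi x := by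
  simp only [stdPhi, neg_sq]

lemma hasDerivAt_stdPhi (x : ℝ) : HasDerivAt stdPhi (-(x * stdPhi x)) x := by
  have hexponent : HasDerivAt (fun x : ℝ ↦ -(x ^ 2) / 2) (-x) x :=
    ((hasDerivAt_pow 2 x).fun_neg.div_const 2).congr_deriv (by push_cast; ring)
  exact (hexponent.exp.div_const _).congr_deriv (by unfold stdPhi; ring)

lemma integrable_pow_mul_stdPhi (n : ℕ) : Integrable (fun x ↦ x ^ n * stdPhi x) := by
  have hn : (-1 : ℝ) < n := neg_one_lt_zero.trans_le n.cast_nonneg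
  have h := (integrable_rpow_mul_exp_neg_mul_sq one_half_pos hn).div_const √(2 * Real.pi)
  convert h using 2 with x
  rw [stdPhi, Real.rpow_natCast, mul_div_assoc]
  ring_nf

lemma integrable_stdPhi : Integrable stdPhi := by
  simpa using integrable_pow_mul_stdPhi 0

lemma integrable_mul_stdPhi : Integrable (fun x ↦ x * stdPhi x) := by
  simpa using integrable_pow_mul_stdPhi 1

-- Stein's identity on a half-line: integrate the derivative of `-(f * stdPhi)`.
lemma setIntegral_Ioi_stein {f f' : ℝ → ℝ} {t : ℝ} (hf : ∀ x ∈ Set.Ici t, HasDerivAt f (f' x) x)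
    (hfφ : IntegrableOn (fun x ↦ f x * stdPhi x) (Set.Ioi t))
    (hderiv : IntegrableOn (fun x ↦ (x * f x - f' x) * stdPhi x) (Set.Ioi t)) :
    ∫ x in Set.Ioi t, (x * f x - f' x) * stdPhi x = f t * stdPhi t := by
  have hd : ∀ x ∈ Set.Ici t,
      HasDerivAt (fun x ↦ -(f x * stdPhi x)) ((x * f x - f' x) * stdPhi x) x := fun x hx ↦
    ((hf x hx).mul (hasDerivAt_stdPhi x)).fun_neg.congr_deriv (by ring)
  have hlim := tendsto_zero_of_hasDerivAt_of_integrableOn_Ioi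
    (fun x hx ↦ hd x (Set.Ioi_subset_Ici_self hx)) hderiv hfφ.neg
  simpa using integral_Ioi_of_hasDerivAt_of_tendsto' hd hderiv hlim

lemma setIntegral_Ioi_stdPhi (t : ℝ) : ∫ x in Set.Ioi t, stdPhi x = stdCDF (-t) := by
  rw [stdCDF, gaussianReal_apply_eq_integral _ one_ne_zero, gaussianPDFReal_zero_one,
    ENNReal.toReal_ofReal (integral_nonneg stdPhi_nonneg), ← integral_comp_neg_Ioi]
  simp only [stdPhi_neg]

lemma setIntegral_Ioi_mul_stdPhi (t : ℝ) : ∫ x in Set.Ioi t, x * stdPhi x = stdPhi t := by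
  simpa using setIntegral_Ioi_stein (t := t) (fun x _ ↦ hasDerivAt_const x (1 : ℝ))
    (by simpa using integrable_stdPhi.integrableOn)
    (by simpa using integrable_mul_stdPhi.integrableOn)

lemma setIntegral_Ioi_sq_mul_stdPhi (t : ℝ) :
    ∫ x in Set.Ioi t, x ^ 2 * stdPhi x = t * stdPhi t + stdCDF (-t) := by
  have h0 := integrable_stdPhi.integrableOn (s := Set.Ioi t)
  have h2 := (integrable_pow_mul_stdPhi 2).integrableOn (s := Set.Ioi t)
  have hexpand : ∀ x, (x * x - 1) * stdPhi x = x ^ 2 * stdPhi x - stdPhi x := fun x ↦ by ring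
  have h := setIntegral_Ioi_stein (t := t) (fun x _ ↦ hasDerivAt_id' x)
    integrable_mul_stdPhi.integrableOn (by simpa only [hexpand] using h2.fun_sub h0)
  simp only [hexpand] at h
  rw [integral_sub h2 h0, setIntegral_Ioi_stdPhi] at h
  linarith

lemma excessMoment_gaussianReal {t : ℝ} (ht : 0 ≤ t) {n : ℕ} (hn : n ≠ 0) :
    excessMoment (gaussianReal 0 1) t n = 2 * ∫ x in Set.Ioi t, (x - t) ^ n * stdPhi x := by
  have hind : ∀ u, max (u - t) 0 ^ n * stdPhi u =
      (Set.Ioi t).indicator (fun x ↦ (x - t) ^ n * stdPhi x) u := fun u ↦ by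
    rcases lt_or_ge t u with h | h
    · rw [Set.indicator_of_mem (Set.mem_Ioi.2 h), max_eq_left (sub_nonneg.2 h.le)]
    · rw [Set.indicator_of_notMem (Set.notMem_Ioi.2 h), max_eq_right (sub_nonpos.2 h),
        zero_pow hn, zero_mul]
  calc excessMoment (gaussianReal 0 1) t n
      = ∫ z, max (|z| - t) 0 ^ n * stdPhi |z| := by
        simp only [excessMoment, integral_gaussianReal_eq_integral_smul one_ne_zero,
          gaussianPDFReal_zero_one, stdPhi_abs, smul_eq_mul, mul_comm]
    _ = 2 * ∫ u in Set.Ioi 0, max (u - t) 0 ^ n * stdPhi u :=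
        integral_comp_abs (f := fun u ↦ max (u - t) 0 ^ n * stdPhi u)
    _ = 2 * ∫ x in Set.Ioi t, (x - t) ^ n * stdPhi x := by
        simp only [hind]
        rw [setIntegral_indicator measurableSet_Ioi,
          Set.inter_eq_right.2 (Set.Ioi_subset_Ioi ht)]

lemma excessMoment_gaussianReal_one {t : ℝ} (ht : 0 ≤ t) :
    excessMoment (gaussianReal 0 1) t 1 = 2 * stdPhi t - 2 * t * stdCDF (-t) := by
  have h0 := integrable_stdPhi.integrableOn (s := Set.Ioi t)
  have h1 := integrable_mul_stdPhi.integrableOn (s := Set.Ioi t)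
  rw [excessMoment_gaussianReal ht one_ne_zero]
  simp only [pow_one, sub_mul]
  rw [integral_sub h1 (h0.const_mul t), integral_const_mul, setIntegral_Ioi_mul_stdPhi,
    setIntegral_Ioi_stdPhi]
  ring

lemma excessMoment_gaussianReal_two {t : ℝ} (ht : 0 ≤ t) :
    excessMoment (gaussianReal 0 1) t 2 =
      2 * ((1 + t ^ 2) * stdCDF (-t) - t * stdPhi t) := by
  have h0 := integrable_stdPhi.integrableOn (s := Set.Ioi t)
  have h1 := integrable_mul_stdPhi.integrableOn (s := Set.Ioi t)
  have h2 := (integrable_pow_mul_stdPhi 2).integrableOn (s := Set.Ioi t)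
  have hexpand : ∀ x, (x - t) ^ 2 * stdPhi x =
      x ^ 2 * stdPhi x - 2 * t * (x * stdPhi x) + t ^ 2 * stdPhi x := fun x ↦ by ring
  rw [excessMoment_gaussianReal ht two_ne_zero]
  simp only [hexpand]
  rw [integral_add (h2.fun_sub (h1.const_mul _)) (h0.const_mul _), integral_sub h2 (h1.const_mul _),
    integral_const_mul, integral_const_mul, setIntegral_Ioi_sq_mul_stdPhi,
    setIntegral_Ioi_mul_stdPhi, setIntegral_Ioi_stdPhi]
  ring

end StandardNormal

/-- **Parametric formula for the soft thresholding minimax MSE.**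
For every `τ ∈ (0,∞)`, setting
`ε = (2φ(τ) − 2τΦ(−τ))/(τ + 2φ(τ) − 2τΦ(−τ))`, one has
`M(ε|Soft) = 2φ(τ)/(τ + 2φ(τ) − 2τΦ(−τ))`. -/
theorem soft_minimax_formula (τ : ℝ) (hτ : 0 < τ) :
    Msoft ((2 * stdPhi τ - 2 * τ * stdCDF (-τ)) /
        (τ + 2 * stdPhi τ - 2 * τ * stdCDF (-τ))) =
      ENNReal.ofReal (2 * stdPhi τ /
        (τ + 2 * stdPhi τ - 2 * τ * stdCDF (-τ))) := by
  have hfirst := excessMoment_gaussianReal_one hτ.le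
  have hsecond := excessMoment_gaussianReal_two hτ.le
  have hA : 0 ≤ 2 * stdPhi τ - 2 * τ * stdCDF (-τ) :=
    hfirst ▸ excessMoment_nonneg (gaussianReal 0 1) τ 1
  have hD : 0 < τ + 2 * stdPhi τ - 2 * τ * stdCDF (-τ) := by linarith
  set D := τ + 2 * stdPhi τ - 2 * τ * stdCDF (-τ)
  set ε := (2 * stdPhi τ - 2 * τ * stdCDF (-τ)) / D with hεdef
  have hε0 : 0 ≤ ε := div_nonneg hA hD.le
  have hε : 1 - ε = τ / D := by rw [hεdef]; field_simp; linarith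
  have hε1 : ε ≤ 1 := sub_nonneg.1 (hε ▸ by positivity)
  have hstat : (1 - ε) * excessMoment (gaussianReal 0 1) τ 1 = ε * τ := by
    rw [hε, hfirst, hεdef]; ring
  have hvalue : 2 * stdPhi τ / D = (1 - ε) * excessMoment (gaussianReal 0 1) τ 2 +
      ε * (Var[id; gaussianReal 0 1] + τ ^ 2) := by
    rw [hε, hsecond, variance_id_gaussianReal, hεdef, NNReal.coe_one]; ring
  rw [hvalue]
  exact iInf_sparseSoftRisk_of_stationary (memLp_id_gaussianReal 2) integral_id_gaussianReal
    hε0 hε1 hτ.le hstat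
end
end

section
/- Let B ≥ 1, τ ≥ 0, and let η^soft(y;τ) = (1 − τ/‖y‖₂)₊ · y be block soft thresholding on ℝ^B. The risk R(μ;τ) = E ‖η^soft(μ+Z;τ) − μ‖₂² (Z ∼ N(0, I_B)) depends on μ only through ‖μ‖₂; write R̃(ξ;τ) = R(μ;τ) when ξ = ‖μ‖₂². Then: (i) ξ ↦ R̃(ξ;τ) is monotone nondecreasing on [0,∞); (ii) R̃(·;τ) is differentiable in ξ with 0 ≤ ∂R̃/∂ξ ≤ 1; (iii) R̃(ξ;τ) ≤ min{ R̃(0;τ) + ξ, B + τ² } for all ξ ≥ 0; and (iv) lim_{ξ→∞} R̃(ξ;τ) = B + τ². -/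
open MeasureTheory ProbabilityTheory ENNReal Filter

noncomputable section

/-- The standard Gaussian measure `N(0, I_B)` on `ℝ^B`. -/
def stdGaussian (B : ℕ) : Measure (Fin B → ℝ) :=
  Measure.pi fun _ => gaussianReal 0 1

/-- Block soft thresholding `η^soft(y;τ) = (1 - τ/‖y‖₂)₊ · y` on `ℝ^B`
(with `η^soft(0;τ) = 0`). -/
def blockSoft (B : ℕ) (τ : ℝ) (y : Fin B → ℝ) : Fin B → ℝ :=
  (max (1 - τ / Real.sqrt (∑ i, (y i) ^ 2)) 0) • y

/-- The risk `R(μ;τ) = E ‖η^soft(μ+Z;τ) − μ‖₂²`, `Z ∼ N(0,I_B)`. -/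
def blockSoftRisk (B : ℕ) (τ : ℝ) (μ : Fin B → ℝ) : ℝ :=
  ∫ z, (∑ i, (blockSoft B τ (μ + z) i - μ i) ^ 2) ∂(stdGaussian B)

/-- The risk as a function `R̃(ξ;τ)` of `ξ = ‖μ‖₂²`, realized at the point
`√ξ · e₁`. -/
def blockSoftRiskSq (B : ℕ) (τ : ℝ) (ξ : ℝ) : ℝ :=
  blockSoftRisk B τ (fun i => if (i : ℕ) = 0 then Real.sqrt ξ else 0)

/-!
Block soft thresholding is `y - P y`, where `P` is the projection onto the ball of radius `τ`, so
its loss at the observation `y = m + z` is `‖z - P y‖ ^ 2`. Along `m = r • e` with `‖e‖ = 1` this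
has derivative `-2 * ⟪(y - P y) - r • e, DP(y) e⟫`. The residual `y - P y` is orthogonal to the
range of `DP(y)`, because `x ↦ ⟪y - P y, P x⟫` is maximal at `x = y`; what remains is
`2 * r * ⟪e, DP(y) e⟫`, and the variable `ξ = r ^ 2` absorbs the factor `2 * r`. As `P` is monotone
and 1-Lipschitz, `⟪e, DP(y) e⟫` lies in `[0, 1]`. Finally `P (r • e + z)` tends to `τ • e` as
`r → ∞`, so the risk tends to `E ‖z - τ • e‖ ^ 2 = E ‖z‖ ^ 2 + τ ^ 2`.
-/

open scoped RealInnerProductSpace Topology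

section OneVariable

variable {f f' : ℝ → ℝ} {ξ : ℝ}

theorem hasDerivWithinAt_comp_sqrt {g : ℝ → ℝ} (hf : ∀ r, HasDerivAt f (2 * r * g r) r)
    (hg : ContinuousAt g √ξ) (hξ : 0 ≤ ξ) :
    HasDerivWithinAt (fun x => f √x) (g √ξ) (Set.Ici 0) ξ := by
  have hpos : ∀ x, 0 < x → HasDerivAt (fun x => f √x) (g √x) x := fun x hx => by
    have hsqrt : √x ≠ 0 := (Real.sqrt_pos.2 hx).ne'
    refine ((hf √x).comp x (Real.hasDerivAt_sqrt hx.ne')).congr_deriv ?_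
    field_simp
  rcases hξ.eq_or_lt with rfl | hξ
  · refine hasDerivWithinAt_Ici_of_tendsto_deriv (s := Set.Ioi 0)
      (fun x hx => (hpos x hx).differentiableAt.differentiableWithinAt) ?_ self_mem_nhdsWithin ?_
    · exact ((hf √0).continuousAt.comp Real.continuous_sqrt.continuousAt).continuousWithinAt
    · refine Tendsto.congr' ?_
        ((hg.comp Real.continuous_sqrt.continuousAt).tendsto.mono_left nhdsWithin_le_nhds)
      filter_upwards [self_mem_nhdsWithin] with x hx using (hpos x hx).deriv.symm
  · exact (hpos ξ hξ).hasDerivWithinAt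

theorem monotoneOn_Ici_of_hasDerivWithinAt_nonneg
    (hf : ∀ x, 0 ≤ x → HasDerivWithinAt f (f' x) (Set.Ici 0) x) (hf' : ∀ x, 0 ≤ f' x) :
    MonotoneOn f (Set.Ici 0) :=
  monotoneOn_of_hasDerivWithinAt_nonneg (convex_Ici 0)
    (fun x hx => (hf x hx).continuousWithinAt)
    (fun x hx => (hf x (interior_subset hx)).mono interior_subset) fun x _ => hf' x

theorem le_add_of_hasDerivWithinAt_mem_Icc
    (hf : ∀ x, 0 ≤ x → HasDerivWithinAt f (f' x) (Set.Ici 0) x)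
    (hf' : ∀ x, f' x ∈ Set.Icc 0 1) (hξ : 0 ≤ ξ) : f ξ ≤ f 0 + ξ := by
  have hbound : ‖f ξ - f 0‖ ≤ 1 * ‖ξ - 0‖ :=
    (convex_Ici 0).norm_image_sub_le_of_norm_hasDerivWithin_le hf
      (fun x _ => by rw [Real.norm_of_nonneg (hf' x).1]; exact (hf' x).2) Set.self_mem_Ici hξ
  rw [one_mul, sub_zero, Real.norm_of_nonneg hξ, Real.norm_eq_abs] at hbound
  linarith [le_abs_self (f ξ - f 0)]

end OneVariable

section Projection

variable {E : Type*} [NormedAddCommGroup E] [InnerProductSpace ℝ E]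

/-- `P` is the metric projection onto its range, expressed through the variational inequality that
characterises the nearest point of a convex set. -/
def IsMetricProjection (P : E → E) : Prop :=
  ∀ x y, 0 ≤ ⟪x - P x, P x - P y⟫

namespace IsMetricProjection

variable {P : E → E} (hP : IsMetricProjection P)

include hP

theorem norm_sub_sq_le_inner (x y : E) : ‖P x - P y‖ ^ 2 ≤ ⟪x - y, P x - P y⟫ := by
  have hsplit : ⟪x - y, P x - P y⟫ =
      ‖P x - P y‖ ^ 2 + ⟪x - P x, P x - P y⟫ + ⟪y - P y, P y - P x⟫ := by
    rw [← real_inner_self_eq_norm_sq]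
    simp only [inner_sub_left, inner_sub_right]
    ring
  linarith [hP x y, hP y x]

theorem lipschitzWith_one : LipschitzWith 1 P := by
  refine LipschitzWith.of_dist_le_mul fun x y => ?_
  rw [dist_eq_norm, dist_eq_norm, NNReal.coe_one, one_mul]
  have hsq : ‖P x - P y‖ ^ 2 ≤ ‖x - y‖ * ‖P x - P y‖ :=
    (hP.norm_sub_sq_le_inner x y).trans (real_inner_le_norm _ _)
  by_contra! hlt
  nlinarith [norm_nonneg (x - y)]

theorem inner_fderiv_nonneg (x v : E) : 0 ≤ ⟪v, fderiv ℝ P x v⟫ := by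
  by_cases hd : DifferentiableAt ℝ P x
  · have hline : HasDerivAt (fun t : ℝ => P (x + t • v)) (fderiv ℝ P x v) 0 :=
      hd.hasFDerivAt.hasLineDerivAt v
    have hinner : HasDerivAt (fun t : ℝ => ⟪v, P (x + t • v)⟫) ⟪v, fderiv ℝ P x v⟫ 0 :=
      (innerSL ℝ v).hasFDerivAt.comp_hasDerivAt 0 hline
    refine hinner.nonneg_of_monotone fun s t hst => ?_
    rcases hst.eq_or_lt with rfl | hst
    · rfl
    have hmono := (sq_nonneg _).trans (hP.norm_sub_sq_le_inner (x + t • v) (x + s • v))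
    rw [add_sub_add_left_eq_sub, ← sub_smul, real_inner_smul_left, inner_sub_right] at hmono
    exact sub_nonneg.1 (nonneg_of_mul_nonneg_right hmono (sub_pos.2 hst))
  · simp [fderiv_zero_of_not_differentiableAt hd]

theorem inner_fderiv_le (x v : E) : ⟪v, fderiv ℝ P x v⟫ ≤ ‖v‖ ^ 2 := by
  have hnorm : ‖fderiv ℝ P x v‖ ≤ ‖v‖ := by
    simpa using (fderiv ℝ P x).le_of_opNorm_le
      (norm_fderiv_le_of_lipschitz ℝ hP.lipschitzWith_one) v
  calc ⟪v, fderiv ℝ P x v⟫ ≤ ‖v‖ * ‖fderiv ℝ P x v‖ := real_inner_le_norm _ _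
    _ ≤ ‖v‖ * ‖v‖ := by gcongr
    _ = ‖v‖ ^ 2 := (sq _).symm

theorem inner_sub_fderiv_eq_zero {x : E} (hd : DifferentiableAt ℝ P x) (v : E) :
    ⟪x - P x, fderiv ℝ P x v⟫ = 0 := by
  have hmax : IsLocalMax (fun y => ⟪x - P x, P y⟫) x :=
    Eventually.of_forall fun y => by
      simpa only [inner_sub_right, sub_nonneg] using hP x y
  have hderiv : HasFDerivAt (fun y => ⟪x - P x, P y⟫)
      ((innerSL ℝ (x - P x)).comp (fderiv ℝ P x)) x :=
    (innerSL ℝ (x - P x)).hasFDerivAt.comp x hd.hasFDerivAt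
  exact DFunLike.congr_fun (hmax.hasFDerivAt_eq_zero hderiv) v

theorem inner_fderiv_mem_Icc {e : E} (he : ‖e‖ = 1) (x : E) :
    ⟪e, fderiv ℝ P x e⟫ ∈ Set.Icc (0 : ℝ) 1 :=
  ⟨hP.inner_fderiv_nonneg x e, by simpa [he] using hP.inner_fderiv_le x e⟩

theorem hasDerivAt_norm_sub_sq {e z : E} {r : ℝ} (hd : DifferentiableAt ℝ P (r • e + z)) :
    HasDerivAt (fun s : ℝ => ‖z - P (s • e + z)‖ ^ 2)
      (2 * r * ⟪e, fderiv ℝ P (r • e + z) e⟫) r := by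
  have hray : HasDerivAt (fun s : ℝ => s • e + z) e r := by
    simpa using ((hasDerivAt_id r).smul_const e).add_const z
  have hres := ((hd.hasFDerivAt.comp_hasDerivAt r hray).const_sub z).norm_sq
  refine hres.congr_deriv ?_
  have hsplit : z - P (r • e + z) = (r • e + z - P (r • e + z)) - r • e := by abel
  rw [Function.comp_apply, hsplit, inner_neg_right, inner_sub_left,
    hP.inner_sub_fderiv_eq_zero hd, real_inner_smul_left]
  ring

theorem abs_norm_sub_sq_sub_le {c : ℝ} (hc : ∀ y, ‖P y‖ ≤ c) (m m' z : E) :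
    |‖z - P (m + z)‖ ^ 2 - ‖z - P (m' + z)‖ ^ 2| ≤ 2 * (‖z‖ + c) * ‖m - m'‖ := by
  have hc₀ : 0 ≤ c := (norm_nonneg _).trans (hc 0)
  have hres : ∀ m, ‖z - P (m + z)‖ ≤ ‖z‖ + c := fun m =>
    (norm_sub_le _ _).trans (add_le_add_right (hc _) _)
  have hdiff : |‖z - P (m + z)‖ - ‖z - P (m' + z)‖| ≤ ‖m - m'‖ := by
    calc _ ≤ ‖(z - P (m + z)) - (z - P (m' + z))‖ := abs_norm_sub_norm_le _ _
      _ = ‖P (m + z) - P (m' + z)‖ := by rw [norm_sub_rev]; congr 1; abel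
      _ ≤ ‖m - m'‖ := by simpa using hP.lipschitzWith_one.norm_sub_le (m + z) (m' + z)
  rw [sq_sub_sq, abs_mul,
    abs_of_nonneg (by positivity : 0 ≤ ‖z - P (m + z)‖ + ‖z - P (m' + z)‖)]
  gcongr
  linarith [hres m, hres m']

end IsMetricProjection

end Projection

section BallProjection

variable {E : Type*} [NormedAddCommGroup E] [InnerProductSpace ℝ E] {τ : ℝ} {y : E}

/-- The nearest-point projection onto the closed ball of radius `τ` about the origin. Its residual
`y - ballProj τ y` is block soft thresholding; at `y = 0` the factor `τ / ‖y‖` is the junk value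
`0`, which is harmless because it multiplies `0`. -/
def ballProj (τ : ℝ) (y : E) : E := min (τ / ‖y‖) 1 • y

theorem ballProj_of_norm_le (h : ‖y‖ ≤ τ) : ballProj τ y = y := by
  rcases eq_or_ne y 0 with rfl | hy
  · simp [ballProj]
  · rw [ballProj, min_eq_right ((one_le_div (norm_pos_iff.2 hy)).2 h), one_smul]

theorem ballProj_of_lt_norm (h : τ < ‖y‖) : ballProj τ y = (τ / ‖y‖) • y := by
  rw [ballProj, min_eq_left (div_le_one_of_le₀ h.le (norm_nonneg y))]

theorem norm_ballProj_le (hτ : 0 ≤ τ) (y : E) : ‖ballProj τ y‖ ≤ τ := by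
  rcases le_or_gt ‖y‖ τ with h | h
  · rwa [ballProj_of_norm_le h]
  · rw [ballProj_of_lt_norm h, norm_smul, Real.norm_of_nonneg (by positivity),
      div_mul_cancel₀ _ (hτ.trans_lt h).ne']

theorem isMetricProjection_ballProj (hτ : 0 ≤ τ) : IsMetricProjection (ballProj τ : E → E) := by
  intro x y
  rcases le_or_gt ‖x‖ τ with h | h
  · simp [ballProj_of_norm_le h]
  have hx : 0 < ‖x‖ := hτ.trans_lt h
  have hresidual : x - ballProj τ x = (1 - τ / ‖x‖) • x := by
    rw [ballProj_of_lt_norm h, sub_smul, one_smul]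
  have hself : ⟪x, ballProj τ x⟫ = τ * ‖x‖ := by
    rw [ballProj_of_lt_norm h, real_inner_smul_right, real_inner_self_eq_norm_sq]
    field_simp
  have hother : ⟪x, ballProj τ y⟫ ≤ ‖x‖ * τ :=
    (real_inner_le_norm _ _).trans (by gcongr; exact norm_ballProj_le hτ y)
  rw [hresidual, real_inner_smul_left, inner_sub_right]
  exact mul_nonneg (sub_nonneg.2 ((div_le_one hx).2 h.le)) (by linarith)

theorem contDiffAt_ballProj {n : WithTop ℕ∞} (hτ : 0 ≤ τ) (hy : ‖y‖ ≠ τ) :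
    ContDiffAt ℝ n (ballProj τ) y := by
  rcases hy.lt_or_gt with h | h
  · refine contDiffAt_id.congr_of_eventuallyEq ?_
    filter_upwards [continuous_norm.continuousAt.eventually_lt_const h] with x hx
      using ballProj_of_norm_le hx.le
  · have hy₀ : y ≠ 0 := norm_pos_iff.1 (hτ.trans_lt h)
    have hscale : ContDiffAt ℝ n (fun x : E => τ / ‖x‖) y :=
      contDiffAt_const.div (contDiffAt_norm ℝ hy₀) (norm_ne_zero_iff.2 hy₀)
    refine (hscale.smul contDiffAt_id).congr_of_eventuallyEq ?_
    filter_upwards [continuous_norm.continuousAt.eventually_const_lt h] with x hx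
      using ballProj_of_lt_norm hx

theorem ballProj_map (U : E ≃ₗᵢ[ℝ] E) (τ : ℝ) (y : E) :
    ballProj τ (U y) = U (ballProj τ y) := by
  rw [ballProj, ballProj, map_smul, U.norm_map]

theorem tendsto_ballProj_smul_add {e : E} (he : ‖e‖ = 1) (τ : ℝ) (z : E) :
    Tendsto (fun r : ℝ => ballProj τ (r • e + z)) atTop (𝓝 (τ • e)) := by
  have hdir : Tendsto (fun r : ℝ => e + r⁻¹ • z) atTop (𝓝 e) := by
    simpa using (tendsto_const_nhds (x := e)).add
      ((tendsto_inv_atTop_zero (𝕜 := ℝ)).smul_const z)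
  have hnormalized : Tendsto (fun r : ℝ => (τ / ‖e + r⁻¹ • z‖) • (e + r⁻¹ • z)) atTop
      (𝓝 (τ • e)) := by
    have hscale := (tendsto_const_nhds (x := τ)).div hdir.norm (by simp [he])
    simpa [he] using hscale.smul hdir
  refine hnormalized.congr' ?_
  filter_upwards [eventually_gt_atTop (τ + ‖z‖), eventually_gt_atTop 0] with r hr hr₀
  have houtside : τ < ‖r • e + z‖ := by
    have := norm_sub_le (r • e + z) z
    rw [add_sub_cancel_right, norm_smul, he, Real.norm_of_nonneg hr₀.le] at this
    linarith
  have hfactor : r • e + z = r • (e + r⁻¹ • z) := by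
    rw [smul_add, smul_inv_smul₀ hr₀.ne']
  rw [ballProj_of_lt_norm houtside, hfactor, norm_smul, smul_smul, Real.norm_of_nonneg hr₀.le]
  congr 1
  field_simp

end BallProjection

section ResidualRisk

variable {E : Type*} [NormedAddCommGroup E] [MeasurableSpace E] {ν : Measure E} {P : E → E}
  {c : ℝ}

/-- The risk at `m`, under additive noise with law `ν`, of the estimator `y ↦ y - P y`: its error at
the observation `m + z` is `(m + z) - P (m + z) - m = z - P (m + z)`. -/
def residualRisk (ν : Measure E) (P : E → E) (m : E) : ℝ := ∫ z, ‖z - P (m + z)‖ ^ 2 ∂ν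

variable [BorelSpace E]

theorem residualRisk_map [NormedSpace ℝ E] (U : E ≃ₗᵢ[ℝ] E) (hU : MeasurePreserving U ν ν)
    (hPU : ∀ y, P (U y) = U (P y)) (m : E) : residualRisk ν P (U m) = residualRisk ν P m := by
  rw [residualRisk, ← hU.integral_comp U.toHomeomorph.measurableEmbedding]
  simp only [← map_add, hPU, ← map_sub, U.norm_map, residualRisk]

theorem residualRisk_congr_norm [InnerProductSpace ℝ E]
    (hiso : ∀ U : E ≃ₗᵢ[ℝ] E, MeasurePreserving U ν ν)
    (hPU : ∀ (U : E ≃ₗᵢ[ℝ] E) y, P (U y) = U (P y)) {m m' : E} (h : ‖m‖ = ‖m'‖) :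
    residualRisk ν P m = residualRisk ν P m' := by
  rw [← Submodule.reflection_sub h, residualRisk_map _ (hiso _) (hPU _)]

theorem integral_id_eq_zero_of_isotropic [NormedSpace ℝ E]
    (hiso : ∀ U : E ≃ₗᵢ[ℝ] E, MeasurePreserving U ν ν) : ∫ z, z ∂ν = 0 := by
  have hneg := (hiso (.neg ℝ)).integral_comp
    (LinearIsometryEquiv.neg ℝ).toHomeomorph.measurableEmbedding id
  simp only [id, LinearIsometryEquiv.coe_neg] at hneg
  rw [integral_neg, neg_eq_iff_add_eq_zero, ← two_smul ℝ] at hneg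
  exact (smul_eq_zero.1 hneg).resolve_left two_ne_zero

variable [SecondCountableTopology E]

theorem integrable_norm_sub_sq [IsFiniteMeasure ν] (hν : MemLp id 2 ν) (hP : Measurable P)
    (hc : ∀ y, ‖P y‖ ≤ c) (m : E) : Integrable (fun z => ‖z - P (m + z)‖ ^ 2) ν := by
  have hbounded : MemLp (fun z => P (m + z)) 2 ν :=
    MemLp.of_bound (hP.comp (measurable_const_add m)).aestronglyMeasurable c
      (Eventually.of_forall fun z => hc _)
  exact (hν.sub hbounded).integrable_norm_pow two_ne_zero

theorem tendsto_residualRisk [IsFiniteMeasure ν] (hν : MemLp id 2 ν) (hP : Measurable P)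
    (hc : ∀ y, ‖P y‖ ≤ c) {ι : Type*} {l : Filter ι} [l.IsCountablyGenerated] {m : ι → E} {p : E}
    (hlim : ∀ z, Tendsto (fun i => P (m i + z)) l (𝓝 p)) :
    Tendsto (fun i => residualRisk ν P (m i)) l (𝓝 (∫ z, ‖z - p‖ ^ 2 ∂ν)) := by
  refine tendsto_integral_filter_of_dominated_convergence (fun z => (‖z‖ + c) ^ 2)
    (Eventually.of_forall fun i => by fun_prop)
    (Eventually.of_forall fun i => Eventually.of_forall fun z => ?_)
    (hν.norm.add (memLp_const c)).integrable_sq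
    (Eventually.of_forall fun z => (tendsto_const_nhds.sub (hlim z)).norm.pow 2)
  rw [Real.norm_of_nonneg (sq_nonneg _)]
  gcongr
  exact (norm_sub_le _ _).trans (add_le_add_right (hc _) _)

end ResidualRisk

section ResidualRiskSlope

variable {E : Type*} [NormedAddCommGroup E] [InnerProductSpace ℝ E] [MeasurableSpace E]
  {ν : Measure E} {P : E → E} {c : ℝ} {e : E}

/-- The derivative of `ξ ↦ residualRisk ν P (√ξ • e)` at `ξ = r ^ 2` with `0 ≤ r`, for a bounded
metric projection `P` that is continuously differentiable at `m + z` for every `m` and `ν`-almost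
every `z`. -/
def residualRiskSlope (ν : Measure E) (P : E → E) (e : E) (r : ℝ) : ℝ :=
  ∫ z, ⟪e, fderiv ℝ P (r • e + z) e⟫ ∂ν

theorem IsMetricProjection.residualRiskSlope_mem_Icc [IsProbabilityMeasure ν]
    (hP : IsMetricProjection P) (he : ‖e‖ = 1) (r : ℝ) :
    residualRiskSlope ν P e r ∈ Set.Icc (0 : ℝ) 1 := by
  refine ⟨integral_nonneg fun z => (hP.inner_fderiv_mem_Icc he _).1, ?_⟩
  simpa [residualRiskSlope] using integral_mono_of_nonneg (μ := ν)
    (Eventually.of_forall fun z => (hP.inner_fderiv_mem_Icc he _).1) (integrable_const 1)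
    (Eventually.of_forall fun z => (hP.inner_fderiv_mem_Icc he (r • e + z)).2)

variable [CompleteSpace E] [BorelSpace E] [SecondCountableTopology E]

theorem measurable_inner_fderiv : Measurable fun x => ⟪e, fderiv ℝ P x e⟫ :=
  measurable_const.inner (measurable_fderiv_apply_const ℝ P e)

namespace IsMetricProjection

variable (hP : IsMetricProjection P) (he : ‖e‖ = 1)

include hP he

theorem continuousAt_residualRiskSlope [IsFiniteMeasure ν] {r : ℝ}
    (hsmooth : ∀ᵐ z ∂ν, ContDiffAt ℝ 1 P (r • e + z)) :
    ContinuousAt (residualRiskSlope ν P e) r := by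
  refine continuousAt_of_dominated (bound := fun _ => 1)
    (Eventually.of_forall fun s => ?_)
    (Eventually.of_forall fun s => Eventually.of_forall fun z => ?_) (integrable_const 1) ?_
  · exact (measurable_inner_fderiv.comp (measurable_const_add _)).aestronglyMeasurable
  · rw [Real.norm_of_nonneg (hP.inner_fderiv_mem_Icc he _).1]
    exact (hP.inner_fderiv_mem_Icc he _).2
  · filter_upwards [hsmooth] with z hz
    have hfderiv : ContinuousAt (fun s : ℝ => fderiv ℝ P (s • e + z)) r :=
      (hz.continuousAt_fderiv one_ne_zero).comp (f := fun s : ℝ => s • e + z) (by fun_prop)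
    fun_prop

theorem hasDerivAt_residualRisk [IsFiniteMeasure ν] (hν : MemLp id 2 ν) (hc : ∀ y, ‖P y‖ ≤ c)
    {r : ℝ} (hdiff : ∀ᵐ z ∂ν, DifferentiableAt ℝ P (r • e + z)) :
    HasDerivAt (fun s : ℝ => residualRisk ν P (s • e)) (2 * r * residualRiskSlope ν P e r) r := by
  have hmeas : Measurable P := hP.lipschitzWith_one.continuous.measurable
  rw [residualRiskSlope, ← integral_const_mul]
  refine (hasDerivAt_integral_of_dominated_loc_of_lip univ_mem
    (bound := fun z => 2 * (‖z‖ + c)) (Eventually.of_forall fun s => by fun_prop)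
    (integrable_norm_sub_sq hν hmeas hc _) ?_ (Eventually.of_forall fun z => ?_)
    (((hν.integrable one_le_two).norm.add (integrable_const c)).const_mul 2) ?_).2
  · exact ((measurable_inner_fderiv.comp (measurable_const_add _)).const_mul
      (2 * r)).aestronglyMeasurable
  · refine LipschitzOnWith.of_dist_le_mul fun s _ t _ => ?_
    have hc₀ : 0 ≤ c := (norm_nonneg _).trans (hc 0)
    have hbound : 0 ≤ 2 * (‖z‖ + c) := by positivity
    have hlip := hP.abs_norm_sub_sq_sub_le hc (s • e) (t • e) z
    rw [← sub_smul, norm_smul, he, mul_one] at hlip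
    rwa [Real.dist_eq, Real.dist_eq, Real.coe_nnabs, abs_of_nonneg hbound]
  · filter_upwards [hdiff] with z hz using hP.hasDerivAt_norm_sub_sq hz

theorem hasDerivWithinAt_residualRisk_sqrt_smul [IsFiniteMeasure ν] (hν : MemLp id 2 ν)
    (hc : ∀ y, ‖P y‖ ≤ c) (hsmooth : ∀ m, ∀ᵐ z ∂ν, ContDiffAt ℝ 1 P (m + z)) {ξ : ℝ}
    (hξ : 0 ≤ ξ) :
    HasDerivWithinAt (fun x => residualRisk ν P (√x • e)) (residualRiskSlope ν P e √ξ)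
      (Set.Ici 0) ξ :=
  hasDerivWithinAt_comp_sqrt (f := fun r => residualRisk ν P (r • e))
    (fun r => hP.hasDerivAt_residualRisk he hν hc
      ((hsmooth (r • e)).mono fun _ h => h.differentiableAt one_ne_zero))
    (hP.continuousAt_residualRiskSlope he (hsmooth _)) hξ

end IsMetricProjection

end ResidualRiskSlope

section BallProjectionRisk

variable {E : Type*} [NormedAddCommGroup E] [InnerProductSpace ℝ E] [MeasurableSpace E]
  {ν : Measure E} {τ : ℝ}

theorem ae_contDiffAt_ballProj {n : WithTop ℕ∞} (hτ : 0 ≤ τ)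
    (hsphere : ∀ x, ν (Metric.sphere x τ) = 0) (m : E) :
    ∀ᵐ z ∂ν, ContDiffAt ℝ n (ballProj τ) (m + z) := by
  filter_upwards [measure_eq_zero_iff_ae_notMem.1 (hsphere (-m))] with z hz
  refine contDiffAt_ballProj hτ fun h => hz ?_
  rwa [mem_sphere_iff_norm, sub_neg_eq_add, add_comm]

variable [CompleteSpace E]

theorem integral_norm_sub_sq_of_centered [IsProbabilityMeasure ν]
    (hν : MemLp id 2 ν) (hν₀ : ∫ z, z ∂ν = 0) (p : E) :
    ∫ z, ‖z - p‖ ^ 2 ∂ν = ∫ z, ‖z‖ ^ 2 ∂ν + ‖p‖ ^ 2 := by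
  have hid : Integrable (fun z => z) ν := hν.integrable one_le_two
  have hsq : Integrable (fun z => ‖z‖ ^ 2) ν := hν.integrable_norm_pow two_ne_zero
  have hinner : Integrable (fun z => ⟪p, z⟫) ν := hid.const_inner p
  have hcross : ∫ z, ⟪p, z⟫ ∂ν = 0 := by rw [integral_inner hid, hν₀, inner_zero_right]
  have hdiff : Integrable (fun z => ‖z‖ ^ 2 - 2 * ⟪p, z⟫) ν := hsq.sub (hinner.const_mul 2)
  simp only [norm_sub_sq_real, real_inner_comm p]
  rw [integral_add hdiff (integrable_const _),
    integral_sub hsq (hinner.const_mul 2), integral_const_mul, hcross]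
  simp

variable [BorelSpace E] [SecondCountableTopology E]

theorem tendsto_residualRisk_ballProj_smul [IsProbabilityMeasure ν]
    (hν : MemLp id 2 ν) (hν₀ : ∫ z, z ∂ν = 0) (hτ : 0 ≤ τ) {e : E} (he : ‖e‖ = 1) :
    Tendsto (fun r : ℝ => residualRisk ν (ballProj τ) (r • e)) atTop
      (𝓝 (∫ z, ‖z‖ ^ 2 ∂ν + τ ^ 2)) := by
  have hlim : ∫ z, ‖z - τ • e‖ ^ 2 ∂ν = ∫ z, ‖z‖ ^ 2 ∂ν + τ ^ 2 := by
    rw [integral_norm_sub_sq_of_centered hν hν₀, norm_smul, he, Real.norm_of_nonneg hτ, mul_one]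
  rw [← hlim]
  exact tendsto_residualRisk hν
    (isMetricProjection_ballProj hτ).lipschitzWith_one.continuous.measurable (norm_ballProj_le hτ)
    (tendsto_ballProj_smul_add he τ)

end BallProjectionRisk

section Gaussian

theorem absolutelyContinuous_pi_fin {n : ℕ} {α : Fin n → Type*} [∀ i, MeasurableSpace (α i)]
    (μ ν : ∀ i, Measure (α i)) [∀ i, SigmaFinite (μ i)] [∀ i, SigmaFinite (ν i)]
    (h : ∀ i, μ i ≪ ν i) : Measure.pi μ ≪ Measure.pi ν := by
  induction n with
  | zero => rw [Subsingleton.elim μ ν]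
  | succ n ih =>
    have hμ := (measurePreserving_piFinSuccAbove μ 0).symm
    have hν := (measurePreserving_piFinSuccAbove ν 0).symm
    rw [← hμ.map_eq, ← hν.map_eq]
    exact ((h 0).prod (ih _ _ fun i => h _)).map hμ.measurable

theorem absolutelyContinuous_pi {ι : Type*} [Fintype ι] {α : ι → Type*}
    [∀ i, MeasurableSpace (α i)] (μ ν : ∀ i, Measure (α i)) [∀ i, SigmaFinite (μ i)]
    [∀ i, SigmaFinite (ν i)] (h : ∀ i, μ i ≪ ν i) : Measure.pi μ ≪ Measure.pi ν := by
  have hμ := measurePreserving_piCongrLeft μ (Fintype.equivFin ι).symm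
  have hν := measurePreserving_piCongrLeft ν (Fintype.equivFin ι).symm
  rw [← hμ.map_eq, ← hν.map_eq]
  exact (absolutelyContinuous_pi_fin _ _ fun _ => h _).map hμ.measurable

variable {E : Type*} [NormedAddCommGroup E] [InnerProductSpace ℝ E] [FiniteDimensional ℝ E]
  [MeasurableSpace E] [BorelSpace E]

theorem stdGaussian_absolutelyContinuous_volume :
    ProbabilityTheory.stdGaussian E ≪ volume := by
  let b := stdOrthonormalBasis ℝ E
  rw [← stdGaussian_map b.repr.symm, ← b.measurePreserving_repr_symm.map_eq,
    ← map_pi_eq_stdGaussian, ← (PiLp.volume_preserving_toLp _).map_eq]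
  exact ((absolutelyContinuous_pi _ _ fun _ =>
    gaussianReal_absolutelyContinuous 0 one_ne_zero).map (by fun_prop)).map (by fun_prop)

theorem integral_norm_sq_stdGaussian :
    ∫ z, ‖z‖ ^ 2 ∂ProbabilityTheory.stdGaussian E = Module.finrank ℝ E := by
  let b := stdOrthonormalBasis ℝ E
  have hcoord : ∀ i, ∫ z, ⟪b i, z⟫ ^ 2 ∂ProbabilityTheory.stdGaussian E = 1 := fun i => by
    have hvar := variance_dual_stdGaussian (innerSL ℝ (b i))
    rw [variance_of_integral_eq_zero (by fun_prop) (integral_strongDual_stdGaussian _)] at hvar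
    simpa using hvar
  have hint : ∀ i, Integrable (fun z => ⟪b i, z⟫ ^ 2) (ProbabilityTheory.stdGaussian E) :=
    fun i => (IsGaussian.memLp_two_id.const_inner (b i)).integrable_sq
  simp_rw [← b.sum_sq_inner_right]
  rw [integral_finsetSum _ fun i _ => hint i]
  simp [hcoord]

end Gaussian

section BlockSoft

variable {E : Type*} [NormedAddCommGroup E] [InnerProductSpace ℝ E] [CompleteSpace E]
  [SecondCountableTopology E] [MeasurableSpace E] [BorelSpace E]

theorem blockSoft_risk_properties_general {ν : Measure E} [IsProbabilityMeasure ν]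
    (hν : MemLp id 2 ν) (hiso : ∀ U : E ≃ₗᵢ[ℝ] E, MeasurePreserving U ν ν) {τ : ℝ} (hτ : 0 ≤ τ)
    (hsphere : ∀ x, ν (Metric.sphere x τ) = 0) {e : E} (he : ‖e‖ = 1) :
    (∀ m m' : E, ‖m‖ = ‖m'‖ →
      residualRisk ν (ballProj τ) m = residualRisk ν (ballProj τ) m') ∧
    (∀ m : E, residualRisk ν (ballProj τ) m = residualRisk ν (ballProj τ) (√(‖m‖ ^ 2) • e)) ∧
    MonotoneOn (fun ξ => residualRisk ν (ballProj τ) (√ξ • e)) (Set.Ici 0) ∧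
    (∀ ξ : ℝ, 0 ≤ ξ → ∃ d : ℝ,
      HasDerivWithinAt (fun ξ => residualRisk ν (ballProj τ) (√ξ • e)) d (Set.Ici 0) ξ ∧
        0 ≤ d ∧ d ≤ 1) ∧
    (∀ ξ : ℝ, 0 ≤ ξ → residualRisk ν (ballProj τ) (√ξ • e) ≤
      min (residualRisk ν (ballProj τ) (√0 • e) + ξ) (∫ z, ‖z‖ ^ 2 ∂ν + τ ^ 2)) ∧
    Tendsto (fun ξ => residualRisk ν (ballProj τ) (√ξ • e)) atTop
      (𝓝 (∫ z, ‖z‖ ^ 2 ∂ν + τ ^ 2)) := by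
  have hP : IsMetricProjection (ballProj τ : E → E) := isMetricProjection_ballProj hτ
  have hderiv : ∀ ξ, 0 ≤ ξ → HasDerivWithinAt (fun ξ => residualRisk ν (ballProj τ) (√ξ • e))
      (residualRiskSlope ν (ballProj τ) e √ξ) (Set.Ici 0) ξ := fun ξ hξ =>
    hP.hasDerivWithinAt_residualRisk_sqrt_smul he hν (norm_ballProj_le hτ)
      (ae_contDiffAt_ballProj hτ hsphere) hξ
  have hslope (ξ : ℝ) := hP.residualRiskSlope_mem_Icc (ν := ν) he √ξ
  have hrot {m m' : E} (h : ‖m‖ = ‖m'‖) := residualRisk_congr_norm (ν := ν) hiso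
    (fun U => ballProj_map U τ) h
  have hmono := monotoneOn_Ici_of_hasDerivWithinAt_nonneg hderiv fun ξ => (hslope ξ).1
  have hlim := (tendsto_residualRisk_ballProj_smul hν (integral_id_eq_zero_of_isotropic hiso)
    hτ he).comp Real.tendsto_sqrt_atTop
  refine ⟨fun m m' => hrot, fun m => hrot (by simp [norm_smul, he]), hmono,
    fun ξ hξ => ⟨_, hderiv ξ hξ, hslope ξ⟩, fun ξ hξ => le_min ?_ ?_, hlim⟩
  · exact le_add_of_hasDerivWithinAt_mem_Icc hderiv hslope hξ
  · exact ge_of_tendsto hlim <|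
      (eventually_ge_atTop ξ).mono fun x hx => hmono hξ (hξ.trans hx) hx

theorem sum_blockSoft_sub_sq {B : ℕ} (τ : ℝ) (μ z : Fin B → ℝ) :
    ∑ i, (blockSoft B τ (μ + z) i - μ i) ^ 2 =
      ‖WithLp.toLp 2 z - ballProj τ (WithLp.toLp 2 μ + WithLp.toLp 2 z)‖ ^ 2 := by
  rw [EuclideanSpace.real_norm_sq_eq]
  refine Finset.sum_congr rfl fun i _ => ?_
  have hfactor (t : ℝ) : max (1 - t) 0 = 1 - min t 1 := by
    rw [← sub_self (1 : ℝ), max_sub_sub_left]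
  simp only [blockSoft, hfactor, ballProj, EuclideanSpace.norm_eq, ← WithLp.toLp_add,
    Real.norm_eq_abs, sq_abs, PiLp.sub_apply, PiLp.smul_apply, Pi.smul_apply, smul_eq_mul,
    Pi.add_apply]
  ring

theorem blockSoftRisk_eq_residualRisk (B : ℕ) (τ : ℝ) (μ : Fin B → ℝ) :
    blockSoftRisk B τ μ = residualRisk
      (ProbabilityTheory.stdGaussian (EuclideanSpace ℝ (Fin B))) (ballProj τ)
      (WithLp.toLp 2 μ) := by
  rw [residualRisk, ← map_pi_eq_stdGaussian, ← MeasurableEquiv.coe_toLp, integral_map_equiv]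
  simp only [blockSoftRisk, sum_blockSoft_sub_sq]
  rfl

theorem blockSoftRiskSq_eq_residualRisk {B : ℕ} (hB : 0 < B) (τ : ℝ) :
    blockSoftRiskSq B τ = fun ξ => residualRisk
      (ProbabilityTheory.stdGaussian (EuclideanSpace ℝ (Fin B))) (ballProj τ)
      (√ξ • EuclideanSpace.single ⟨0, hB⟩ 1) := by
  ext ξ
  rw [blockSoftRiskSq, blockSoftRisk_eq_residualRisk]
  congr 1
  ext i
  simp [Fin.ext_iff]

end BlockSoft

/-- **Properties of the block soft thresholding risk.**
For `B ≥ 1` and `τ ≥ 0`: the risk `R(μ;τ)` depends on `μ` only through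
`‖μ‖₂²` (so `R(μ;τ) = R̃(‖μ‖₂²;τ)`); `R̃(·;τ)` is nondecreasing on `[0,∞)`;
it is differentiable with derivative in `[0,1]`; it satisfies
`R̃(ξ;τ) ≤ min(R̃(0;τ) + ξ, B + τ²)`; and `R̃(ξ;τ) → B + τ²` as `ξ → ∞`. -/
theorem blockSoft_risk_properties (B : ℕ) (hB : 1 ≤ B) (τ : ℝ) (hτ : 0 ≤ τ) :
    (∀ μ μ' : Fin B → ℝ, (∑ i, (μ i) ^ 2) = (∑ i, (μ' i) ^ 2) →
      blockSoftRisk B τ μ = blockSoftRisk B τ μ') ∧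
    (∀ μ : Fin B → ℝ,
      blockSoftRisk B τ μ = blockSoftRiskSq B τ (∑ i, (μ i) ^ 2)) ∧
    MonotoneOn (blockSoftRiskSq B τ) (Set.Ici 0) ∧
    (∀ ξ : ℝ, 0 ≤ ξ → ∃ d : ℝ,
      HasDerivWithinAt (blockSoftRiskSq B τ) d (Set.Ici 0) ξ ∧ 0 ≤ d ∧ d ≤ 1) ∧
    (∀ ξ : ℝ, 0 ≤ ξ →
      blockSoftRiskSq B τ ξ ≤ min (blockSoftRiskSq B τ 0 + ξ) (B + τ ^ 2)) ∧
    Tendsto (blockSoftRiskSq B τ) atTop (nhds ((B : ℝ) + τ ^ 2)) := by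
  have : Nonempty (Fin B) := ⟨0, hB⟩
  have general := blockSoft_risk_properties_general
    (ν := ProbabilityTheory.stdGaussian (EuclideanSpace ℝ (Fin B))) IsGaussian.memLp_two_id
    (fun U => ⟨by fun_prop, stdGaussian_map U⟩) hτ
    (fun x => stdGaussian_absolutelyContinuous_volume (Measure.addHaar_sphere volume x τ))
    (e := EuclideanSpace.single ⟨0, hB⟩ 1) (by simp)
  rw [integral_norm_sq_stdGaussian, finrank_euclideanSpace_fin] at general
  obtain ⟨hrot, hray, hrest⟩ := general
  simp only [blockSoftRisk_eq_residualRisk, blockSoftRiskSq_eq_residualRisk hB]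
  refine ⟨fun μ μ' h => hrot _ _ ?_, fun μ => ?_, hrest⟩
  · simp [EuclideanSpace.norm_eq, h]
  · simpa [EuclideanSpace.real_norm_sq_eq] using hray (WithLp.toLp 2 μ)
end
end
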